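/- For any two partitions λ and μ, X(λ, μ; Q_s, Q_t) = X(μ, λ; Q_t, Q_s) in the rational function field ℚ(q, Q_s, Q_t); that is, the quantity X is symmetric under simultaneously exchanging the two partitions and the two parameters Q_s and Q_t. -/

import Mathlib

/-- A partition, encoded as a weakly decreasing, eventually-zero sequence of
natural numbers; `parts i` is the `(i+1)`-st part `λ_{i+1}` (0-indexed rows). -/
structure Ptn where
  parts : ℕ → ℕ
  antitone' : Antitone parts
  eventually_zero : ∃ N, ∀ i, N ≤ i → parts i = 0

namespace Ptn

/-- `conj p k` is the conjugate-partition part `λ'_{k+1} = #{i ≥ 1 : λ_i ≥ k+1}`. -/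
noncomputable def conj (p : Ptn) (k : ℕ) : ℕ := Nat.card {i : ℕ // k < p.parts i}

/-- `|λ| = Σ_{i ≥ 1} λ_i`. -/
noncomputable def size (p : Ptn) : ℕ := ∑ᶠ i, p.parts i

/-- `n(λ) = Σ_{i ≥ 1} (i-1) λ_i`. -/
noncomputable def nn (p : Ptn) : ℕ := ∑ᶠ i, i * p.parts i

/-- The empty partition. -/
def empty : Ptn := ⟨fun _ => 0, fun _ _ _ => le_rfl, ⟨0, fun _ _ => rfl⟩⟩

end Ptn

/-- The generalised hook length `h_{i,j}^{λ,μ} = λ_i - i + μ'_j - j + 1`, for the node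
in (0-indexed) row `i` and column `j`, i.e. the 1-indexed node `(i+1, j+1)`. -/
noncomputable def ghook (lam mu : Ptn) (i j : ℕ) : ℤ :=
  (lam.parts i : ℤ) - (i + 1) + (mu.conj j : ℤ) - (j + 1) + 1

/-- The rational function field `ℚ(q, Q_s, Q_t)` in three indeterminates. -/
noncomputable abbrev K3 : Type := FractionRing (MvPolynomial (Fin 3) ℚ)

/-- The indeterminate `q`. -/
noncomputable def q3 : K3 := algebraMap (MvPolynomial (Fin 3) ℚ) K3 (MvPolynomial.X 0)

/-- The indeterminate `Q_s`. -/
noncomputable def Qs3 : K3 := algebraMap (MvPolynomial (Fin 3) ℚ) K3 (MvPolynomial.X 1)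

/-- The indeterminate `Q_t`. -/
noncomputable def Qt3 : K3 := algebraMap (MvPolynomial (Fin 3) ℚ) K3 (MvPolynomial.X 2)

/-- The quantity `X(λ, μ; Q_s, Q_t) = ∏_{(i,j)∈[μ]} (q^{j-i} Q_t - Q_s) ·
∏_{(i,j)∈[λ]} ( (q^{j-i} Q_s - q^{μ_1} Q_t) ·
∏_{k=1}^{μ_1} (q^{j-i} Q_s - q^{k-1-μ'_k} Q_t)/(q^{j-i} Q_s - q^{k-μ'_k} Q_t) )`. -/
noncomputable def Xst {K : Type*} [Field K] (q Qs Qt : K) (lam mu : Ptn) : K :=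
  (∏ᶠ i, ∏ j ∈ Finset.range (mu.parts i), (q ^ ((j : ℤ) - (i : ℤ)) * Qt - Qs)) *
  ∏ᶠ i, ∏ j ∈ Finset.range (lam.parts i),
    ((q ^ ((j : ℤ) - (i : ℤ)) * Qs - q ^ (mu.parts 0 : ℤ) * Qt) *
      ∏ k ∈ Finset.range (mu.parts 0),
        (q ^ ((j : ℤ) - (i : ℤ)) * Qs - q ^ (((k : ℤ) + 1) - 1 - (mu.conj k : ℤ)) * Qt) /
          (q ^ ((j : ℤ) - (i : ℤ)) * Qs - q ^ (((k : ℤ) + 1) - (mu.conj k : ℤ)) * Qt))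

namespace Ptn

/-- The rows longer than `k` are exactly the first `conj k` ones. -/
theorem lt_conj_iff (p : Ptn) (i k : ℕ) : i < p.conj k ↔ k < p.parts i := by
  classical
  obtain ⟨N, hN⟩ := p.eventually_zero
  have hex : ∃ n, ¬ k < p.parts n := ⟨N, by simp [hN N le_rfl]⟩
  have hset : ∀ n, k < p.parts n ↔ n < Nat.find hex := fun n => by
    refine ⟨fun hn => ?_, fun hn => not_not.mp (Nat.find_min hex hn)⟩
    by_contra hle
    exact Nat.find_spec hex (hn.trans_le (p.antitone' (not_lt.mp hle)))
  have hcard : p.conj k = Nat.find hex := by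
    unfold conj
    rw [Nat.card_congr (Equiv.subtypeEquivRight hset), Nat.card_congr Fin.equivSubtype.symm,
      Nat.card_fin]
  rw [hcard, hset]

/-- A product over the rows of a partition is a finite product over sufficiently many rows. -/
theorem finprod_rows_eq_prod {M : Type*} [CommMonoid M] (p : Ptn) {N : ℕ}
    (hN : ∀ i, N ≤ i → p.parts i = 0) (f : ℕ → ℕ → M) :
    (∏ᶠ i, ∏ j ∈ Finset.range (p.parts i), f i j) =
      ∏ i ∈ Finset.range N, ∏ j ∈ Finset.range (p.parts i), f i j := by
  refine finprod_eq_prod_of_mulSupport_subset _ fun i hi => ?_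
  by_contra hni
  simp only [Finset.coe_range, Set.mem_Iio, not_lt] at hni
  exact hi (by simp [hN i hni])

/-- Exchanging rows and columns in a product over the nodes of a partition. -/
theorem prod_columns_eq_prod_rows {M : Type*} [CommMonoid M] (p : Ptn) {N : ℕ}
    (hN : ∀ i, N ≤ i → p.parts i = 0) (f : ℕ → ℕ → M) :
    (∏ k ∈ Finset.range (p.parts 0), ∏ i ∈ Finset.range (p.conj k), f i k) =
      ∏ i ∈ Finset.range N, ∏ k ∈ Finset.range (p.parts i), f i k := by
  refine Finset.prod_comm' fun k i => ?_
  simp only [Finset.mem_range, p.lt_conj_iff]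
  refine ⟨fun h => ⟨h.2, ?_⟩, fun h => ⟨h.1.trans_le (p.antitone' (Nat.zero_le i)), h.1⟩⟩
  by_contra! hle
  have := hN i hle
  omega

end Ptn

section NodeFactor

variable {K : Type*} [Field K]

/-- The factor by which a pair of nodes, of residues `x` and `y`, contributes to `Xst`. -/
noncomputable def nodeFactor (q x y : K) : K := (x - q⁻¹ * y) * (x - q * y) / (x - y) ^ 2

theorem nodeFactor_comm {q : K} (hq : q ≠ 0) (x y : K) :
    nodeFactor q x y = nodeFactor q y x := by
  unfold nodeFactor
  rw [show (y - x) ^ 2 = (x - y) ^ 2 by ring]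
  congr 1
  field_simp
  ring

theorem column_eq_prod_nodeFactor {q x Q : K} (hq : q ≠ 0) (h : ∀ a : ℤ, x - q ^ a * Q ≠ 0)
    (k n : ℕ) :
    (x - q ^ ((k : ℤ) + 1 - 1 - (n : ℤ)) * Q) / (x - q ^ ((k : ℤ) + 1 - (n : ℤ)) * Q) =
      (x - q ^ (k : ℤ) * Q) / (x - q ^ ((k : ℤ) + 1) * Q) *
        ∏ i ∈ Finset.range n, nodeFactor q x (q ^ ((k : ℤ) - (i : ℤ)) * Q) := by
  induction n with
  | zero => simp
  | succ n ih =>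
    rw [Finset.prod_range_succ, ← mul_assoc, ← ih, nodeFactor, ← mul_assoc q⁻¹, ← mul_assoc q,
      ← zpow_neg_one, ← zpow_add₀ hq, ← zpow_one_add₀ hq,
      show (k : ℤ) + 1 - 1 - ((n + 1 : ℕ) : ℤ) = -1 + (k - n) by push_cast; ring,
      show (k : ℤ) + 1 - ((n + 1 : ℕ) : ℤ) = k - n by push_cast; ring,
      show (k : ℤ) + 1 - 1 - n = k - n by ring, show (k : ℤ) + 1 - n = 1 + (k - n) by ring]
    have h₀ := h (k - n)
    have h₁ := h (1 + (k - n))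
    generalize x - q ^ ((k : ℤ) - n) * Q = a at *
    generalize x - q ^ (1 + ((k : ℤ) - n)) * Q = b at *
    field_simp

theorem mul_prod_div_telescope {q x Q : K} (h : ∀ a : ℤ, x - q ^ a * Q ≠ 0) (n : ℕ) :
    (x - q ^ (n : ℤ) * Q) *
      ∏ k ∈ Finset.range n, (x - q ^ (k : ℤ) * Q) / (x - q ^ ((k : ℤ) + 1) * Q) = x - Q := by
  induction n with
  | zero => simp
  | succ n ih =>
    rw [Finset.prod_range_succ, Nat.cast_succ, mul_left_comm, mul_div_cancel₀ _ (h _), mul_comm, ih]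

/-- The contribution to `Xst` of a single node of the first partition, of residue `x`. -/
theorem node_contribution_eq {q x Q : K} (hq : q ≠ 0) (h : ∀ a : ℤ, x - q ^ a * Q ≠ 0)
    (mu : Ptn) {N : ℕ} (hN : ∀ i, N ≤ i → mu.parts i = 0) :
    (x - q ^ (mu.parts 0 : ℤ) * Q) *
      ∏ k ∈ Finset.range (mu.parts 0),
        (x - q ^ (((k : ℤ) + 1) - 1 - (mu.conj k : ℤ)) * Q) /
          (x - q ^ (((k : ℤ) + 1) - (mu.conj k : ℤ)) * Q) =
      (x - Q) * ∏ i ∈ Finset.range N, ∏ j ∈ Finset.range (mu.parts i),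
        nodeFactor q x (q ^ ((j : ℤ) - (i : ℤ)) * Q) := by
  simp_rw [column_eq_prod_nodeFactor hq h]
  rw [Finset.prod_mul_distrib, ← mul_assoc, mul_prod_div_telescope h,
    mu.prod_columns_eq_prod_rows hN fun i k => nodeFactor q x (q ^ ((k : ℤ) - (i : ℤ)) * Q)]

/-- `Xst` as a product over the nodes of both partitions and over the pairs of nodes. -/
theorem Xst_eq_prod_nodeFactor {q Qs Qt : K} (hq : q ≠ 0)
    (h : ∀ a b : ℤ, q ^ a * Qs - q ^ b * Qt ≠ 0) (lam mu : Ptn) {N : ℕ}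
    (hlam : ∀ i, N ≤ i → lam.parts i = 0) (hmu : ∀ i, N ≤ i → mu.parts i = 0) :
    Xst q Qs Qt lam mu =
      (∏ i ∈ Finset.range N, ∏ j ∈ Finset.range (mu.parts i),
        (q ^ ((j : ℤ) - (i : ℤ)) * Qt - Qs)) *
      ((∏ i ∈ Finset.range N, ∏ j ∈ Finset.range (lam.parts i),
        (q ^ ((j : ℤ) - (i : ℤ)) * Qs - Qt)) *
      ∏ i ∈ Finset.range N, ∏ j ∈ Finset.range (lam.parts i),
        ∏ i' ∈ Finset.range N, ∏ j' ∈ Finset.range (mu.parts i'),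
          nodeFactor q (q ^ ((j : ℤ) - (i : ℤ)) * Qs) (q ^ ((j' : ℤ) - (i' : ℤ)) * Qt)) := by
  unfold Xst
  rw [mu.finprod_rows_eq_prod hmu, lam.finprod_rows_eq_prod hlam]
  simp_rw [node_contribution_eq hq (h _) mu hmu, Finset.prod_mul_distrib]

/-- The symmetry of `Xst` in any field where no denominator vanishes. -/
theorem Xst_comm {q Qs Qt : K} (hq : q ≠ 0)
    (h : ∀ a b : ℤ, q ^ a * Qs - q ^ b * Qt ≠ 0) (lam mu : Ptn) :
    Xst q Qs Qt lam mu = Xst q Qt Qs mu lam := by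
  obtain ⟨L, hL⟩ := lam.eventually_zero
  obtain ⟨M, hM⟩ := mu.eventually_zero
  have hlam : ∀ i, max L M ≤ i → lam.parts i = 0 := fun i hi => hL i (le_of_max_le_left hi)
  have hmu : ∀ i, max L M ≤ i → mu.parts i = 0 := fun i hi => hM i (le_of_max_le_right hi)
  have h' : ∀ a b : ℤ, q ^ a * Qt - q ^ b * Qs ≠ 0 := fun a b hab =>
    h b a (by rw [← neg_sub, hab, neg_zero])
  rw [Xst_eq_prod_nodeFactor hq h lam mu hlam hmu, Xst_eq_prod_nodeFactor hq h' mu lam hmu hlam,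
    mul_left_comm]
  congr 2
  simp_rw [Finset.prod_sigma' (Finset.range (max L M))]
  rw [Finset.prod_comm]
  simp_rw [nodeFactor_comm hq]

end NodeFactor

theorem q3_ne_zero : q3 ≠ 0 := by
  simp [q3, MvPolynomial.X_ne_zero]

theorem q3_zpow_mul_Qs3_ne_Qt3 (d : ℤ) : q3 ^ d * Qs3 ≠ Qt3 := by
  have key : ∀ m n : ℕ, q3 ^ m * Qs3 ≠ q3 ^ n * Qt3 := by
    intro m n heq
    simp only [q3, Qs3, Qt3, ← map_pow, ← map_mul] at heq
    have hpoly := IsFractionRing.injective (MvPolynomial (Fin 3) ℚ) K3 heq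
    have heval := congrArg (MvPolynomial.eval ![1, 0, 1]) hpoly
    simp at heval
  intro heq
  obtain ⟨n, rfl | rfl⟩ := d.eq_nat_or_neg
  · exact key n 0 (by simpa using heq)
  · refine key 0 n ?_
    rw [← heq, zpow_neg, zpow_natCast, mul_inv_cancel_left₀ (pow_ne_zero n q3_ne_zero), pow_zero,
      one_mul]

theorem q3_zpow_mul_Qs3_sub_ne_zero (a b : ℤ) : q3 ^ a * Qs3 - q3 ^ b * Qt3 ≠ 0 := by
  intro hab
  refine q3_zpow_mul_Qs3_ne_Qt3 (-b + a) ?_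
  rw [zpow_add₀ q3_ne_zero, mul_assoc, sub_eq_zero.mp hab, ← mul_assoc, ← zpow_add₀ q3_ne_zero,
    neg_add_cancel, zpow_zero, one_mul]

/-- `X(λ, μ; Q_s, Q_t) = X(μ, λ; Q_t, Q_s)` in `ℚ(q, Q_s, Q_t)`. -/
theorem stmt7 (lam mu : Ptn) :
    Xst q3 Qs3 Qt3 lam mu = Xst q3 Qt3 Qs3 mu lam :=
  Xst_comm q3_ne_zero q3_zpow_mul_Qs3_sub_ne_zero lam mu
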